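/- Two bow-free acyclic path diagrams G and G' on the same finite vertex type V are distributionally equivalent up to closure if and only if they are algebraically equivalent: the Euclidean closures of M(G) and M(G') in Matrix V V ℝ are equal if and only if A(G) = A(G'). (The consequence stated immediately after Theorem 4.) -/

import Mathlib

open Matrix

structure MixedGraph (V : Type*) where
  D : V → V → Prop
  B : V → V → Prop
  symm : ∀ v w, B v w → B w v
  irrefl : ∀ v, ¬ B v v

namespace MixedGraph

variable {V : Type*}

/-- The graph is acyclic: no directed cycles. -/
def Acyclic (G : MixedGraph V) : Prop := ∀ v, ¬ Relation.TransGen G.D v v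

/-- The graph is simple: for distinct `v, w`, at most one of
`D v w`, `D w v`, `B v w` holds. -/
def Simple (G : MixedGraph V) : Prop :=
  ∀ v w, v ≠ w →
    ¬ (G.D v w ∧ G.D w v) ∧ ¬ (G.D v w ∧ G.B v w) ∧ ¬ (G.D w v ∧ G.B v w)

/-- A bow-free acyclic path diagram: a simple acyclic mixed graph. -/
def IsBAP (G : MixedGraph V) : Prop := G.Acyclic ∧ G.Simple

/-- `Λ` is compatible with `G`. -/
def LamCompat (G : MixedGraph V) (Λ : Matrix V V ℝ) : Prop :=
  ∀ v w, ¬ G.D v w → Λ v w = 0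

/-- `Ω` is compatible with `G`. -/
def OmCompat [Fintype V] (G : MixedGraph V) (Ω : Matrix V V ℝ) : Prop :=
  Ω.PosDef ∧ ∀ v w, v ≠ w → ¬ G.B v w → ¬ G.B w v → Ω v w = 0

/-- The model `M(G)` of a mixed graph. -/
def model [Fintype V] [DecidableEq V] (G : MixedGraph V) : Set (Matrix V V ℝ) :=
  {S | ∃ Λ Ω : Matrix V V ℝ, G.LamCompat Λ ∧ G.OmCompat Ω ∧
    S = ((1 - Λ)⁻¹)ᵀ * Ω * (1 - Λ)⁻¹}

/-- The algebraic model `A(G)`: the real Zariski closure of `M(G)`. -/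
def algModel [Fintype V] [DecidableEq V] (G : MixedGraph V) : Set (Matrix V V ℝ) :=
  {S | ∀ p : MvPolynomial (V × V) ℝ,
    (∀ T ∈ G.model, MvPolynomial.eval (fun e => T e.1 e.2) p = 0) →
    MvPolynomial.eval (fun e => S e.1 e.2) p = 0}

/-- The skeleton (adjacency relation) of `G`. -/
def adj (G : MixedGraph V) (v w : V) : Prop :=
  v ≠ w ∧ (G.D v w ∨ G.D w v ∨ G.B v w)

/-- A collider triple of `G`. -/
def ColliderTriple (G : MixedGraph V) (u v w : V) : Prop :=
  u ≠ v ∧ v ≠ w ∧ u ≠ w ∧ (G.D u v ∨ G.B u v) ∧ (G.D w v ∨ G.B w v)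

/-- A v-structure of `G`. -/
def VStructure (G : MixedGraph V) (u v w : V) : Prop :=
  G.ColliderTriple u v w ∧ ¬ G.adj u w

end MixedGraph

namespace MixedGraph

variable {V : Type*} {G G' : MixedGraph V}

theorem lamCompat_zero : G.LamCompat (0 : Matrix V V ℝ) := fun _ _ _ => rfl

theorem wellFounded_of_acyclic [Finite V] (hG : G.Acyclic) : WellFounded G.D := by
  have : Std.Irrefl (Relation.TransGen G.D) := ⟨hG⟩
  exact Subrelation.wf Relation.TransGen.single
    (Finite.wellFounded_of_trans_of_irrefl (Relation.TransGen G.D))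

variable [Fintype V] [DecidableEq V]

/-- Evaluation of polynomials in the matrix entries at a matrix. -/
noncomputable abbrev evalAt (S : Matrix V V ℝ) : MvPolynomial (V × V) ℝ →+* ℝ :=
  MvPolynomial.eval fun e => S e.1 e.2

/-- The descendants of `v` bound the exponents `k` for which row `v` of `Λ ^ k` is nonzero. -/
theorem le_ncard_descendants_of_pow_ne_zero (hG : G.Acyclic) {Λ : Matrix V V ℝ}
    (hΛ : G.LamCompat Λ) (k : ℕ) (v w : V) (h : (Λ ^ k) v w ≠ 0) :
    k ≤ {u | Relation.TransGen G.D v u}.ncard := by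
  induction k generalizing v with
  | zero => exact Nat.zero_le _
  | succ k ih =>
    rw [pow_succ', Matrix.mul_apply] at h
    obtain ⟨u, -, hu⟩ := Finset.exists_ne_zero_of_sum_ne_zero h
    have hD : G.D v u := by
      by_contra hD
      exact hu (by rw [hΛ v u hD, zero_mul])
    refine (ih u (right_ne_zero_of_mul hu)).trans_lt (Set.ncard_lt_ncard ?_)
    exact ⟨fun x hx => Relation.TransGen.head hD hx,
      fun hsub => hG u (hsub (Relation.TransGen.single hD))⟩

theorem pow_card_add_one_eq_zero (hG : G.Acyclic) {Λ : Matrix V V ℝ} (hΛ : G.LamCompat Λ) :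
    Λ ^ (Fintype.card V + 1) = 0 := by
  ext v w
  by_contra h
  have hle := le_ncard_descendants_of_pow_ne_zero hG hΛ _ v w h
  have hcard := Set.ncard_le_card {u | Relation.TransGen G.D v u}
  rw [Nat.card_eq_fintype_card] at hcard
  omega

theorem isUnit_one_sub (hG : G.Acyclic) {Λ : Matrix V V ℝ} (hΛ : G.LamCompat Λ) :
    IsUnit (1 - Λ) :=
  IsNilpotent.isUnit_one_sub ⟨_, pow_card_add_one_eq_zero hG hΛ⟩

theorem inv_one_sub_eq_geom_sum (hG : G.Acyclic) {Λ : Matrix V V ℝ} (hΛ : G.LamCompat Λ) :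
    (1 - Λ)⁻¹ = ∑ i ∈ Finset.range (Fintype.card V + 1), Λ ^ i := by
  apply Matrix.inv_eq_right_inv
  rw [mul_neg_geom_sum, pow_card_add_one_eq_zero hG hΛ, sub_zero]

theorem transpose_mul_model_mul (hG : G.Acyclic) {Λ : Matrix V V ℝ} (hΛ : G.LamCompat Λ)
    (Ω : Matrix V V ℝ) :
    (1 - Λ)ᵀ * (((1 - Λ)⁻¹)ᵀ * Ω * (1 - Λ)⁻¹) * (1 - Λ) = Ω := by
  have hdet := (Matrix.isUnit_iff_isUnit_det _).1 (isUnit_one_sub hG hΛ)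
  rw [mul_assoc, mul_assoc, Matrix.nonsing_inv_mul _ hdet, mul_one, ← mul_assoc,
    ← Matrix.transpose_mul, Matrix.nonsing_inv_mul _ hdet, Matrix.transpose_one, one_mul]

theorem posDef_transpose_mul_mul {U S : Matrix V V ℝ} (hU : IsUnit U) (hS : S.PosDef) :
    (Uᵀ * S * U).PosDef := by
  simpa [Matrix.star_eq_conjTranspose, Matrix.conjTranspose_eq_transpose_of_trivial] using
    (Matrix.IsUnit.posDef_star_left_conjugate_iff hU).2 hS

theorem posDef_of_mem_model (hG : G.Acyclic) {S : Matrix V V ℝ} (hS : S ∈ G.model) :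
    S.PosDef := by
  obtain ⟨Λ, Ω, hΛ, hΩ, rfl⟩ := hS
  refine posDef_transpose_mul_mul ?_ hΩ.1
  exact (Matrix.isUnit_nonsing_inv_iff).2 (isUnit_one_sub hG hΛ)

theorem mem_model_of_lamCompat (hG : G.Acyclic) {S Λ : Matrix V V ℝ} (hS : S.PosDef)
    (hΛ : G.LamCompat Λ)
    (hzero : ∀ v w, v ≠ w → ¬ G.B v w → ¬ G.B w v → ((1 - Λ)ᵀ * S * (1 - Λ) : Matrix V V ℝ) v w = 0) :
    S ∈ G.model := by
  have hU := isUnit_one_sub hG hΛ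
  have hdet := (Matrix.isUnit_iff_isUnit_det _).1 hU
  refine ⟨Λ, (1 - Λ)ᵀ * S * (1 - Λ), hΛ, ⟨posDef_transpose_mul_mul hU hS, hzero⟩, ?_⟩
  rw [← mul_assoc, mul_assoc, Matrix.mul_nonsing_inv _ hdet, mul_one, ← mul_assoc,
    ← Matrix.transpose_mul, Matrix.mul_nonsing_inv _ hdet, Matrix.transpose_one, one_mul]

theorem omCompat_one : G.OmCompat (1 : Matrix V V ℝ) :=
  ⟨Matrix.PosDef.one, fun _ _ hvw _ _ => Matrix.one_apply_ne hvw⟩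

/-- Bow-freeness makes the coefficients on the edges into `w` solve a linear system whose
coefficients only involve the columns of `Λ` at the parents of `w`. -/
theorem linear_system_of_mem_model (hG : G.IsBAP) {Λ Ω : Matrix V V ℝ} (hΛ : G.LamCompat Λ)
    (hΩ : G.OmCompat Ω) {v w : V} (hvw : G.D v w) :
    ((1 - Λ)ᵀ * (((1 - Λ)⁻¹)ᵀ * Ω * (1 - Λ)⁻¹) * Λ : Matrix V V ℝ) v w =
      ((1 - Λ)ᵀ * (((1 - Λ)⁻¹)ᵀ * Ω * (1 - Λ)⁻¹) : Matrix V V ℝ) v w := by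
  have hne : v ≠ w := by
    rintro rfl
    exact hG.1 v (Relation.TransGen.single hvw)
  have hB : ¬ G.B v w := fun h => (hG.2 v w hne).2.1 ⟨hvw, h⟩
  have h := congrFun (congrFun (transpose_mul_model_mul hG.1 hΛ Ω) v) w
  rw [hΩ.2 v w hne hB fun h => hB (G.symm _ _ h), mul_sub, mul_one, Matrix.sub_apply] at h
  linarith

/-- The column of `Λ` at `w` is a rational function of the matrix in the model, with denominator
not vanishing at the identity matrix. -/
theorem exists_rational_column (hG : G.IsBAP) (w : V) :
    ∃ (q : MvPolynomial (V × V) ℝ) (N : V → MvPolynomial (V × V) ℝ),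
      evalAt 1 q ≠ 0 ∧ (∀ u, ¬ G.D u w → N u = 0) ∧
      ∀ Λ Ω : Matrix V V ℝ, G.LamCompat Λ → G.OmCompat Ω → ∀ u,
        evalAt (((1 - Λ)⁻¹)ᵀ * Ω * (1 - Λ)⁻¹) q * Λ u w =
          evalAt (((1 - Λ)⁻¹)ᵀ * Ω * (1 - Λ)⁻¹) (N u) := by
  classical
  induction w using (wellFounded_of_acyclic hG.1).induction with
  | _ w ih =>
  have ih' : ∀ v, ∃ (q : MvPolynomial (V × V) ℝ) (N : V → MvPolynomial (V × V) ℝ),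
      G.D v w → evalAt 1 q ≠ 0 ∧ ∀ Λ Ω : Matrix V V ℝ, G.LamCompat Λ → G.OmCompat Ω → ∀ u,
        evalAt (((1 - Λ)⁻¹)ᵀ * Ω * (1 - Λ)⁻¹) q * Λ u v =
          evalAt (((1 - Λ)⁻¹)ᵀ * Ω * (1 - Λ)⁻¹) (N u) := by
    intro v
    by_cases hv : G.D v w
    · obtain ⟨q, N, hq, -, hN⟩ := ih v hv
      exact ⟨q, N, fun _ => ⟨hq, hN⟩⟩
    · exact ⟨0, 0, fun h => absurd h hv⟩
  choose q N hqN using ih'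
  let row (v u : V) : MvPolynomial (V × V) ℝ :=
    q v * MvPolynomial.X (v, u) - ∑ x, N v x * MvPolynomial.X (x, u)
  have hrow : ∀ Λ Ω : Matrix V V ℝ, G.LamCompat Λ → G.OmCompat Ω → ∀ v u, G.D v w →
      evalAt (((1 - Λ)⁻¹)ᵀ * Ω * (1 - Λ)⁻¹) (row v u) =
        evalAt (((1 - Λ)⁻¹)ᵀ * Ω * (1 - Λ)⁻¹) (q v) *
          ((1 - Λ)ᵀ * (((1 - Λ)⁻¹)ᵀ * Ω * (1 - Λ)⁻¹) : Matrix V V ℝ) v u := by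
    intro Λ Ω hΛ hΩ v u hv
    have h := (hqN v hv).2 Λ Ω hΛ hΩ
    generalize ((1 - Λ)⁻¹)ᵀ * Ω * (1 - Λ)⁻¹ = S at h ⊢
    rw [Matrix.transpose_sub, Matrix.transpose_one, sub_mul, one_mul, Matrix.sub_apply,
      Matrix.mul_apply]
    simp only [row, map_sub, map_mul, map_sum, MvPolynomial.eval_X, ← h,
      Matrix.transpose_apply, mul_sub, Finset.mul_sum, mul_assoc]
  let P : Matrix V V (MvPolynomial (V × V) ℝ) :=
    Matrix.of fun v u => if G.D v w then row v u else if v = u then 1 else 0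
  let b : V → MvPolynomial (V × V) ℝ := fun v => if G.D v w then row v w else 0
  refine ⟨P.det, fun u => if G.D u w then (P.adjugate *ᵥ b) u else 0, ?_, ?_, ?_⟩
  · have hP : (evalAt 1).mapMatrix P =
        Matrix.diagonal fun v => if G.D v w then evalAt 1 (q v) else 1 := by
      ext v u
      have h := hrow 0 1 lamCompat_zero omCompat_one v u
      simp only [sub_zero, inv_one, Matrix.transpose_one, mul_one] at h
      by_cases hv : G.D v w
      · simp [P, hv, h hv, Matrix.diagonal_apply, Matrix.one_apply]
      · simp [P, hv, Matrix.diagonal_apply, apply_ite (evalAt (1 : Matrix V V ℝ))]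
    rw [RingHom.map_det, hP, Matrix.det_diagonal]
    refine Finset.prod_ne_zero_iff.2 fun v _ => ?_
    split_ifs with hv
    · exact (hqN v hv).1
    · exact one_ne_zero
  · intro u hu
    exact if_neg hu
  · intro Λ Ω hΛ hΩ u
    have hr := hrow Λ Ω hΛ hΩ
    have hsys := fun v (hv : G.D v w) => linear_system_of_mem_model hG hΛ hΩ hv
    generalize ((1 - Λ)⁻¹)ᵀ * Ω * (1 - Λ)⁻¹ = S at hr hsys ⊢
    by_cases hu : G.D u w
    swap
    · simp [hu, hΛ u w hu]
    have hlin : (evalAt S).mapMatrix P *ᵥ (fun x => Λ x w) = evalAt S ∘ b := by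
      ext v
      by_cases hv : G.D v w
      · have h := hsys v hv
        rw [Matrix.mul_apply] at h
        simp only [Matrix.mulVec, dotProduct, P, b, hv, if_true, RingHom.mapMatrix_apply,
          Matrix.map_apply, Matrix.of_apply, Function.comp_apply, hr v _ hv, mul_assoc,
          ← Finset.mul_sum, h]
      · simp [Matrix.mulVec, dotProduct, P, b, hv, hΛ v w hv]
    simp only [hu, if_true]
    rw [RingHom.map_mulVec, ← hlin, Matrix.mulVec_mulVec, ← RingHom.mapMatrix_apply,
      ← map_mul, Matrix.adjugate_mul]
    simp [Matrix.mulVec, dotProduct, Matrix.one_apply, apply_ite (evalAt S)]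

/-- The whole of `Λ` is a rational function of the matrix in the model, with denominator not
vanishing at the identity matrix. -/
theorem exists_rational_inverse (hG : G.IsBAP) :
    ∃ (q : MvPolynomial (V × V) ℝ) (N : Matrix V V (MvPolynomial (V × V) ℝ)),
      evalAt 1 q ≠ 0 ∧ (∀ u w, ¬ G.D u w → N u w = 0) ∧
      ∀ Λ Ω : Matrix V V ℝ, G.LamCompat Λ → G.OmCompat Ω →
        evalAt (((1 - Λ)⁻¹)ᵀ * Ω * (1 - Λ)⁻¹) q • Λ =
          (evalAt (((1 - Λ)⁻¹)ᵀ * Ω * (1 - Λ)⁻¹)).mapMatrix N := by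
  choose q N hq hzero hN using exists_rational_column hG
  refine ⟨∏ w, q w, Matrix.of fun u w => (∏ x ∈ Finset.univ.erase w, q x) * N w u, ?_, ?_, ?_⟩
  · rw [map_prod]
    exact Finset.prod_ne_zero_iff.2 fun w _ => hq w
  · intro u w hu
    simp [hzero w u hu]
  · intro Λ Ω hΛ hΩ
    ext u w
    simp only [RingHom.mapMatrix_apply, Matrix.map_apply, Matrix.of_apply, Matrix.smul_apply,
      smul_eq_mul]
    rw [map_mul, ← hN w Λ Ω hΛ hΩ u, ← Finset.prod_erase_mul _ _ (Finset.mem_univ w), map_mul,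
      mul_assoc]

/-- Positive definite points of the algebraic model lie in the model, away from a hypersurface
that misses the identity matrix. -/
theorem exists_denominator (hG : G.IsBAP) :
    ∃ q : MvPolynomial (V × V) ℝ, evalAt 1 q ≠ 0 ∧
      ∀ S ∈ G.algModel, S.PosDef → evalAt S q ≠ 0 → S ∈ G.model := by
  obtain ⟨q, N, hq, hzero, hN⟩ := exists_rational_inverse hG
  refine ⟨q, hq, fun S hS hpos hqS => ?_⟩
  have hscale : ∀ (T Λ : Matrix V V ℝ) (c : ℝ),
      (c • (1 : Matrix V V ℝ) - c • Λ)ᵀ * T * (c • (1 : Matrix V V ℝ) - c • Λ) =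
        (c * c) • ((1 - Λ)ᵀ * T * (1 - Λ)) := by
    intro T Λ c
    rw [← smul_sub, Matrix.transpose_smul, Matrix.smul_mul, Matrix.smul_mul, Matrix.mul_smul,
      smul_smul]
  let X : Matrix V V (MvPolynomial (V × V) ℝ) := Matrix.of fun v w => MvPolynomial.X (v, w)
  have hX : ∀ T : Matrix V V ℝ, (evalAt T).mapMatrix X = T := by
    intro T
    ext v w
    simp [X]
  let F : Matrix V V (MvPolynomial (V × V) ℝ) :=
    (Matrix.diagonal (fun _ => q) - N)ᵀ * X * (Matrix.diagonal (fun _ => q) - N)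
  have hF : ∀ T Λ : Matrix V V ℝ, evalAt T q • Λ = (evalAt T).mapMatrix N →
      (evalAt T).mapMatrix F =
        (evalAt T q * evalAt T q) • ((1 - Λ)ᵀ * T * (1 - Λ)) := by
    intro T Λ h
    have hdiff : (evalAt T).mapMatrix (Matrix.diagonal (fun _ => q) - N) =
        evalAt T q • (1 : Matrix V V ℝ) - evalAt T q • Λ := by
      rw [map_sub, ← h, Matrix.smul_one_eq_diagonal]
      congr 1
      simp [Matrix.diagonal_map]
    rw [← hscale, ← hdiff, map_mul, map_mul, hX, RingHom.mapMatrix_apply,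
      RingHom.mapMatrix_apply, ← Matrix.transpose_map]
  have hΛ : evalAt S q • ((evalAt S q)⁻¹ • (evalAt S).mapMatrix N) = (evalAt S).mapMatrix N :=
    smul_inv_smul₀ hqS _
  refine mem_model_of_lamCompat hG.1 (Λ := (evalAt S q)⁻¹ • (evalAt S).mapMatrix N) hpos ?_ ?_
  · intro v w hvw
    simp [hzero v w hvw]
  · intro v w hne hB hB'
    have hvanish : evalAt S (F v w) = 0 := by
      refine hS (F v w) ?_
      rintro T ⟨Λ, Ω, hΛ, hΩ, rfl⟩
      have h := congrFun (congrFun (hF _ Λ (hN Λ Ω hΛ hΩ)) v) w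
      rw [transpose_mul_model_mul hG.1 hΛ, Matrix.smul_apply, hΩ.2 v w hne hB hB',
        smul_zero] at h
      exact h
    have h := congrFun (congrFun (hF S _ hΛ) v) w
    rw [RingHom.mapMatrix_apply, Matrix.map_apply, hvanish, Matrix.smul_apply, smul_eq_mul] at h
    exact (mul_eq_zero.1 h.symm).resolve_left (mul_ne_zero hqS hqS)

/-- A point of the model is a limit of points of the model off any hypersurface missing the
identity matrix. -/
theorem mem_closure_evalAt_ne_zero (hG : G.Acyclic) {q : MvPolynomial (V × V) ℝ}
    (hq : evalAt 1 q ≠ 0) {S : Matrix V V ℝ} (hS : S ∈ G.model) :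
    S ∈ closure {T ∈ G.model | evalAt T q ≠ 0} := by
  obtain ⟨Λ, Ω, hΛ, hΩ, rfl⟩ := hS
  let K : Matrix V V (Polynomial ℝ) :=
    ∑ i ∈ Finset.range (Fintype.card V + 1), ((Polynomial.X : Polynomial ℝ) • Polynomial.C.mapMatrix Λ) ^ i
  let T : Matrix V V (Polynomial ℝ) :=
    Kᵀ * (1 + (Polynomial.X : Polynomial ℝ) • Polynomial.C.mapMatrix (Ω - 1)) * K
  have hsmul : ∀ (t : ℝ) (M : Matrix V V ℝ), (Polynomial.evalRingHom t).mapMatrix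
      ((Polynomial.X : Polynomial ℝ) • Polynomial.C.mapMatrix M) = t • M := by
    intro t M
    ext v w
    simpa using mul_comm (M v w) t
  have hT : ∀ t : ℝ, (Polynomial.evalRingHom t).mapMatrix T =
      ((1 - t • Λ)⁻¹)ᵀ * (1 + t • (Ω - 1)) * (1 - t • Λ)⁻¹ := by
    intro t
    have htΛ : G.LamCompat (t • Λ) := fun v w h => by simp [hΛ v w h]
    have hK : (Polynomial.evalRingHom t).mapMatrix K = (1 - t • Λ)⁻¹ := by
      rw [inv_one_sub_eq_geom_sum hG htΛ]
      simp only [K, map_sum, map_pow, hsmul]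
    rw [← hK, map_mul, map_mul, map_add, map_one, hsmul, RingHom.mapMatrix_apply,
      RingHom.mapMatrix_apply, ← Matrix.transpose_map]
  let p : Polynomial ℝ := MvPolynomial.aeval (fun e => T e.1 e.2) q
  have hp : ∀ t : ℝ, p.eval t = evalAt ((Polynomial.evalRingHom t).mapMatrix T) q := by
    intro t
    have h := MvPolynomial.eval₂_comp_left (Polynomial.evalRingHom t)
      (algebraMap ℝ (Polynomial ℝ)) (fun e : V × V => T e.1 e.2) q
    simp only [p, MvPolynomial.aeval_def]
    refine h.trans ?_
    rw [evalAt, MvPolynomial.eval]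
    congr 1
    ext x
    simp
  have hp0 : p ≠ 0 := by
    intro h0
    have h := hp 0
    rw [h0, hT] at h
    exact hq (by simpa using h.symm)
  have hcont : Continuous fun t : ℝ => (Polynomial.evalRingHom t).mapMatrix T :=
    continuous_matrix fun v w => (T v w).continuous
  have hlim : Filter.Tendsto (fun t : ℝ => (Polynomial.evalRingHom t).mapMatrix T)
      (nhdsWithin 1 (Set.Iio 1)) (nhds (((1 - Λ)⁻¹)ᵀ * Ω * (1 - Λ)⁻¹)) := by
    have h := hcont.tendsto 1
    rw [hT 1] at h
    simp only [one_smul, add_sub_cancel] at h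
    exact h.mono_left nhdsWithin_le_nhds
  refine mem_closure_of_tendsto hlim ?_
  have hroots : {t | p.IsRoot t}.Finite := Polynomial.finite_setOfPred_isRoot hp0
  have hnear : ({t | p.IsRoot t} \ {1})ᶜ ∈ nhds (1 : ℝ) :=
    (hroots.subset Set.sdiff_subset).isClosed.isOpen_compl.mem_nhds (by simp)
  filter_upwards [mem_nhdsWithin_of_mem_nhds hnear, Ioo_mem_nhdsLT zero_lt_one] with t ht ht01
  refine ⟨⟨t • Λ, 1 + t • (Ω - 1), fun v w h => by simp [hΛ v w h], ⟨?_, ?_⟩, hT t⟩, ?_⟩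
  · have h : 1 + t • (Ω - 1) = (1 - t) • (1 : Matrix V V ℝ) + t • Ω := by
      module
    rw [h]
    exact (Matrix.PosDef.one.smul (sub_pos.2 ht01.2)).add (hΩ.1.smul ht01.1)
  · intro v w hne hB hB'
    simp [Matrix.one_apply_ne hne, hΩ.2 v w hne hB hB']
  · rw [← hp]
    exact fun h => ht ⟨h, ht01.2.ne⟩

theorem model_subset_algModel : G.model ⊆ G.algModel := fun S hS _ hp => hp S hS

theorem model_subset_closure_model (hG : G.IsBAP) (hG' : G'.IsBAP)
    (h : G.algModel ⊆ G'.algModel) : G.model ⊆ closure G'.model := by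
  obtain ⟨q, hq, hmem⟩ := exists_denominator hG'
  intro S hS
  refine closure_mono ?_ (mem_closure_evalAt_ne_zero hG.1 hq hS)
  rintro T ⟨hT, hqT⟩
  exact hmem T (h (model_subset_algModel hT)) (posDef_of_mem_model hG.1 hT) hqT

theorem algModel_subset_algModel (h : closure G.model ⊆ closure G'.model) :
    G.algModel ⊆ G'.algModel := by
  intro S hS p hp
  refine hS p fun T hT => ?_
  have hcont : Continuous fun M : Matrix V V ℝ => evalAt M p :=
    (MvPolynomial.continuous_eval p).comp
      (continuous_pi fun e => continuous_id.matrix_elem e.1 e.2)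
  have hclosed : IsClosed {M : Matrix V V ℝ | evalAt M p = 0} :=
    isClosed_eq hcont continuous_const
  exact closure_minimal hp hclosed (h (subset_closure hT))

end MixedGraph

/-- Two BAPs are distributionally equivalent up to closure iff they
are algebraically equivalent. -/
theorem closure_model_eq_iff_algModel_eq
    {V : Type*} [Fintype V] [DecidableEq V]
    (G G' : MixedGraph V) (hG : G.IsBAP) (hG' : G'.IsBAP) :
    closure (G.model) = closure (G'.model) ↔ G.algModel = G'.algModel := by
  constructor
  · intro h
    exact (MixedGraph.algModel_subset_algModel h.subset).antisymm
      (MixedGraph.algModel_subset_algModel h.superset)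
  · intro h
    exact (closure_minimal (MixedGraph.model_subset_closure_model hG hG' h.subset)
      isClosed_closure).antisymm
      (closure_minimal (MixedGraph.model_subset_closure_model hG' hG h.superset)
      isClosed_closure)
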